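/- The discrete standard (isotropic) total variation TV₂(u) = Σ_{i,j} √((∇ˣu)_{i,j}² + (∇ʸu)_{i,j}²) does not satisfy the generalized co-area formula: there exist n, m ≥ 1 and u : Fin n × Fin m → ℝ such that TV₂(u) ≠ ∫_ℝ TV₂(χ_{u>t}) dt, where (χ_{u>t})_{i,j} = 1 if u_{i,j} > t and 0 otherwise. -/

import Mathlib

open MeasureTheory

/-- Discrete gradient in the x-direction with Neumann boundary conditions. -/
def gradX {n m : ℕ} (u : Fin n × Fin m → ℝ) (q : Fin n × Fin m) : ℝ :=
  if h : (q.1 : ℕ) + 1 < n then u (⟨(q.1 : ℕ) + 1, h⟩, q.2) - u q else 0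

/-- Discrete gradient in the y-direction with Neumann boundary conditions. -/
def gradY {n m : ℕ} (u : Fin n × Fin m → ℝ) (q : Fin n × Fin m) : ℝ :=
  if h : (q.2 : ℕ) + 1 < m then u (q.1, ⟨(q.2 : ℕ) + 1, h⟩) - u q else 0

/-- The discrete standard (isotropic) total variation. -/
noncomputable def isoTV {n m : ℕ} (u : Fin n × Fin m → ℝ) : ℝ :=
  ∑ q : Fin n × Fin m, Real.sqrt ((gradX u q) ^ 2 + (gradY u q) ^ 2)

/- Let `B ⊆ A` and `u = χ_A + χ_B`. The nonconstant strict upper level sets of `u` are `A`, for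
`t ∈ [0, 1)`, and `B`, for `t ∈ [1, 2)`, so the co-area formula for `u` would say
`TV₂(χ_A + χ_B) = TV₂(χ_A) + TV₂(χ_B)`. But `TV₂` is a sum over the pixels of Euclidean norms of
gradients, so this fails as soon as the gradients of `χ_A` and `χ_B` point in different directions
at some pixel. -/

section LevelSets

variable {α : Type*}

/-- The indicator `χ_{u>t}` of the strict upper level set of `u` at height `t`. -/
noncomputable def levelIndicator (u : α → ℝ) (t : ℝ) : α → ℝ :=
  fun a => if u a > t then 1 else 0

theorem levelIndicator_eq_one {u : α → ℝ} {t : ℝ} (h : ∀ a, t < u a) :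
    levelIndicator u t = 1 :=
  funext fun a => if_pos (h a)

theorem levelIndicator_eq_zero {u : α → ℝ} {t : ℝ} (h : ∀ a, u a ≤ t) :
    levelIndicator u t = 0 :=
  funext fun a => if_neg (h a).not_gt

theorem levelIndicator_eq_indicator {u : α → ℝ} {t : ℝ} {A : Set α}
    (h : ∀ a, t < u a ↔ a ∈ A) : levelIndicator u t = A.indicator 1 := by
  classical
  ext a
  simp only [levelIndicator, gt_iff_lt, h, Set.indicator_apply, Pi.one_apply]

variable {E : Type*} [NormedAddCommGroup E]

theorem map_levelIndicator_indicator_add_indicator {J : (α → ℝ) → E} (h₀ : J 0 = 0)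
    (h₁ : J 1 = 0) {A B : Set α} (hBA : B ⊆ A) (t : ℝ) :
    J (levelIndicator (A.indicator 1 + B.indicator 1) t) =
      (Set.Ico (0 : ℝ) 1).indicator (fun _ => J (A.indicator 1)) t +
        (Set.Ico (1 : ℝ) 2).indicator (fun _ => J (B.indicator 1)) t := by
  classical
  have value (a : α) : (A.indicator 1 + B.indicator 1 : α → ℝ) a =
      if a ∈ B then 2 else if a ∈ A then 1 else 0 := by
    by_cases hB : a ∈ B
    · simp [hB, hBA hB, one_add_one_eq_two]
    · by_cases hA : a ∈ A <;> simp [hA, hB]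
  rcases lt_or_ge t 0 with ht₀ | ht₀
  · rw [levelIndicator_eq_one fun a => by rw [value a]; grind, h₁]
    simp [ht₀.not_ge, (ht₀.trans one_pos).not_ge]
  rcases lt_or_ge t 1 with ht₁ | ht₁
  · rw [levelIndicator_eq_indicator (A := A) fun a => by rw [value a]; grind]
    simp [ht₀, ht₁]
  rcases lt_or_ge t 2 with ht₂ | ht₂
  · rw [levelIndicator_eq_indicator (A := B) fun a => by rw [value a]; grind]
    simp [ht₁, ht₂]
  · rw [levelIndicator_eq_zero fun a => by rw [value a]; grind, h₀]
    simp [ht₁.not_gt, ht₂.not_gt]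

theorem integral_levelIndicator_indicator_add_indicator [NormedSpace ℝ E] [CompleteSpace E]
    {J : (α → ℝ) → E} (h₀ : J 0 = 0) (h₁ : J 1 = 0) {A B : Set α} (hBA : B ⊆ A) :
    ∫ t : ℝ, J (levelIndicator (A.indicator 1 + B.indicator 1) t) =
      J (A.indicator 1) + J (B.indicator 1) := by
  have integrable (a b : ℝ) (c : E) : Integrable ((Set.Ico a b).indicator fun _ => c) :=
    (integrableOn_const measure_Ico_lt_top.ne).integrable_indicator measurableSet_Ico
  simp_rw [map_levelIndicator_indicator_add_indicator h₀ h₁ hBA]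
  rw [integral_add (integrable 0 1 _) (integrable 1 2 _),
    integral_indicator_const _ measurableSet_Ico, integral_indicator_const _ measurableSet_Ico,
    Real.volume_real_Ico_of_le zero_le_one, Real.volume_real_Ico_of_le one_le_two,
    sub_zero, show (2 : ℝ) - 1 = 1 by norm_num, one_smul, one_smul]

end LevelSets

theorem not_sameRay_of_inner_eq_zero {V : Type*} [NormedAddCommGroup V] [InnerProductSpace ℝ V]
    {x y : V} (hx : x ≠ 0) (hy : y ≠ 0) (hxy : inner ℝ x y = 0) : ¬SameRay ℝ x y := by
  intro h
  obtain ⟨r, -, rfl⟩ := h.exists_nonneg_left hx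
  rw [real_inner_smul_right] at hxy
  have hr : r = 0 := (mul_eq_zero.mp hxy).resolve_right (inner_self_ne_zero.mpr hx)
  exact hy (by rw [hr, zero_smul])

section TotalVariation

variable {n m : ℕ}

/-- The discrete gradient `(∇ˣu, ∇ʸu)` at a pixel. It lives in `EuclideanSpace` because `TV₂`
measures it in the Euclidean norm, whereas `ℝ × ℝ` carries the sup norm. -/
noncomputable def gradXY (u : Fin n × Fin m → ℝ) (q : Fin n × Fin m) : EuclideanSpace ℝ (Fin 2) :=
  !₂[gradX u q, gradY u q]

theorem gradX_add (u v : Fin n × Fin m → ℝ) (q : Fin n × Fin m) :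
    gradX (u + v) q = gradX u q + gradX v q := by
  unfold gradX
  split_ifs
  · simp only [Pi.add_apply, add_sub_add_comm]
  · rw [add_zero]

theorem gradY_add (u v : Fin n × Fin m → ℝ) (q : Fin n × Fin m) :
    gradY (u + v) q = gradY u q + gradY v q := by
  unfold gradY
  split_ifs
  · simp only [Pi.add_apply, add_sub_add_comm]
  · rw [add_zero]

theorem gradXY_add (u v : Fin n × Fin m → ℝ) (q : Fin n × Fin m) :
    gradXY (u + v) q = gradXY u q + gradXY v q := by
  ext i
  fin_cases i
  · exact gradX_add u v q
  · exact gradY_add u v q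

theorem isoTV_eq_sum_norm (u : Fin n × Fin m → ℝ) : isoTV u = ∑ q, ‖gradXY u q‖ := by
  simp [isoTV, gradXY, EuclideanSpace.norm_eq]

theorem isoTV_const (c : ℝ) : isoTV (fun _ : Fin n × Fin m => c) = 0 := by
  simp [isoTV, gradX, gradY]

theorem isoTV_add_lt {u v : Fin n × Fin m → ℝ} {q : Fin n × Fin m}
    (hq : ¬SameRay ℝ (gradXY u q) (gradXY v q)) : isoTV (u + v) < isoTV u + isoTV v := by
  simp_rw [isoTV_eq_sum_norm, gradXY_add, ← Finset.sum_add_distrib]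
  exact Finset.sum_lt_sum (fun p _ => norm_add_le (gradXY u p) (gradXY v p))
    ⟨q, Finset.mem_univ q, norm_add_lt_of_not_sameRay hq⟩

theorem exists_isoTV_indicator_add_indicator_lt (hn : 2 ≤ n) (hm : 2 ≤ m) :
    ∃ A B : Set (Fin n × Fin m), B ⊆ A ∧
      isoTV (A.indicator 1 + B.indicator 1) < isoTV (A.indicator 1) + isoTV (B.indicator 1) := by
  let A : Set (Fin n × Fin m) := {q | (q.2 : ℕ) = 0}
  let B : Set (Fin n × Fin m) := {q | (q.1 : ℕ) = 1 ∧ (q.2 : ℕ) = 0}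
  let origin : Fin n × Fin m := (⟨0, by lia⟩, ⟨0, by lia⟩)
  have hA : gradXY (A.indicator 1) origin = !₂[0, -1] := by
    simp [gradXY, gradX, gradY, A, origin, show 1 < m by lia]
  have hB : gradXY (B.indicator 1) origin = !₂[1, 0] := by
    simp [gradXY, gradX, gradY, B, origin, show 1 < n by lia]
  refine ⟨A, B, fun q hq => hq.2, isoTV_add_lt (q := origin) ?_⟩
  rw [hA, hB]
  have down_ne_zero : (!₂[0, -1] : EuclideanSpace ℝ (Fin 2)) ≠ 0 := by simp
  have right_ne_zero : (!₂[1, 0] : EuclideanSpace ℝ (Fin 2)) ≠ 0 := by simp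
  exact not_sameRay_of_inner_eq_zero down_ne_zero right_ne_zero (by simp [PiLp.inner_apply])

end TotalVariation

theorem isoTV_not_coarea_general {n m : ℕ} (hn : 2 ≤ n) (hm : 2 ≤ m) :
    ∃ u : Fin n × Fin m → ℝ, isoTV u < ∫ t : ℝ, isoTV (levelIndicator u t) := by
  obtain ⟨A, B, hBA, hlt⟩ := exists_isoTV_indicator_add_indicator_lt hn hm
  refine ⟨A.indicator 1 + B.indicator 1, ?_⟩
  rwa [integral_levelIndicator_indicator_add_indicator (isoTV_const 0) (isoTV_const 1) hBA]

/-- The discrete standard (isotropic) total variation does not satisfy the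
generalized co-area formula. -/
theorem isoTV_not_coarea :
    ∃ (n m : ℕ), 1 ≤ n ∧ 1 ≤ m ∧ ∃ u : Fin n × Fin m → ℝ,
      isoTV u ≠ ∫ t : ℝ, isoTV (fun q => if u q > t then (1 : ℝ) else 0) := by
  obtain ⟨u, hu⟩ := isoTV_not_coarea_general (le_refl 2) (le_refl 2)
  exact ⟨2, 2, one_le_two, one_le_two, u, hu.ne⟩
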